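/- A subalgebra 𝔤 ⊆ so(1,n+1)_{ℝp} is weakly irreducible if and only if 𝔤 is one of the following: (type 1) 𝔤^{1,𝔥} = {(a,A,X) : a ∈ ℝ, A ∈ 𝔥, X ∈ ℝⁿ} for a subalgebra 𝔥 ⊆ so(n); (type 2) 𝔤^{2,𝔥} = {(0,A,X) : A ∈ 𝔥, X ∈ ℝⁿ} for a subalgebra 𝔥 ⊆ so(n); (type 3) 𝔤^{3,𝔥,φ} = {(φ(A),A,X) : A ∈ 𝔥, X ∈ ℝⁿ} for a subalgebra 𝔥 ⊆ so(n) with z(𝔥) ≠ 0 and a nonzero linear map φ : 𝔥 → ℝ with φ|_{[𝔥,𝔥]} = 0; (type 4) 𝔤^{4,𝔥,m,ψ} = {(0, A, X + ψ(A)) : A ∈ 𝔥, X ∈ ℝᵐ} for a fixed orthogonal decomposition ℝⁿ = ℝᵐ ⊕ ℝ^{n−m}, a subalgebra 𝔥 ⊆ so(m) with dim z(𝔥) ≥ n−m, and a surjective linear map ψ : 𝔥 → ℝ^{n−m} with ψ|_{[𝔥,𝔥]} = 0. -/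

import Mathlib

open Module

noncomputable section

namespace Weyl

variable {V : Type*} [AddCommGroup V] [Module ℝ V]

/-- The endomorphism `X ∧ Y : Z ↦ B(X,Z)•Y − B(Y,Z)•X`. -/
def wedge (B : LinearMap.BilinForm ℝ V) (X Y : V) : Module.End ℝ V where
  toFun Z := B X Z • Y - B Y Z • X
  map_add' z z' := by simp only [map_add, add_smul]; abel
  map_smul' c z := by simp only [map_smul, smul_eq_mul, RingHom.id_apply, mul_smul, smul_sub]

/-- The Lie algebra `so(B)` of endomorphisms skew-symmetric with respect to `B`. -/
def soSet (B : LinearMap.BilinForm ℝ V) : Set (Module.End ℝ V) :=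
  {A | ∀ x y, B (A x) y + B x (A y) = 0}

/-- The conformal Lie algebra `co(B) = ℝ·id ⊕ so(B)`. -/
def coSet (B : LinearMap.BilinForm ℝ V) : Set (Module.End ℝ V) :=
  {F | ∃ c : ℝ, ∃ S ∈ soSet B, F = c • (1 : Module.End ℝ V) + S}

/-- The first prolongation `g^{(1)}` of a set of endomorphisms:
linear maps `φ : V → g` with `φ(X)Y = φ(Y)X`. -/
def firstProlong (g : Set (Module.End ℝ V)) : Set (V →ₗ[ℝ] Module.End ℝ V) :=
  {φ | (∀ x, φ x ∈ g) ∧ ∀ x y, φ x y = φ y x}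

/-- `R` is an algebraic curvature tensor of type `g` (a linear map on `Λ²V`,
encoded as an antisymmetric bilinear map, with values in `g`, satisfying the
Bianchi identity). -/
def IsCurv (g : Set (Module.End ℝ V)) (R : V →ₗ[ℝ] V →ₗ[ℝ] Module.End ℝ V) : Prop :=
  (∀ x y, R x y = - R y x) ∧ (∀ x y, R x y ∈ g) ∧
    ∀ x y z, R x y z + R y z x + R z x y = 0

/-- `L(ℛ(g))`: the span of all values of algebraic curvature tensors of type `g`. -/
def curvSpan (g : Set (Module.End ℝ V)) : Submodule ℝ (Module.End ℝ V) :=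
  Submodule.span ℝ {F | ∃ R, IsCurv g R ∧ ∃ x y, F = R x y}

/-- `g` is a Berger algebra: `L(ℛ(g)) = g`. -/
def IsBerger (g : Set (Module.End ℝ V)) : Prop :=
  (curvSpan g : Set (Module.End ℝ V)) = g

/-- `g` is (the underlying set of) a Lie subalgebra of `gl(V)`. -/
def IsLieSub (g : Set (Module.End ℝ V)) : Prop :=
  (0 : Module.End ℝ V) ∈ g ∧ (∀ F ∈ g, ∀ F' ∈ g, F + F' ∈ g) ∧
    (∀ (c : ℝ), ∀ F ∈ g, c • F ∈ g) ∧ ∀ F ∈ g, ∀ F' ∈ g, F * F' - F' * F ∈ g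

/-- The subspace `W` is invariant under every element of `g`. -/
def Invariant (g : Set (Module.End ℝ V)) (W : Submodule ℝ V) : Prop :=
  ∀ F ∈ g, ∀ x ∈ W, F x ∈ W

/-- The restriction of `B` to `W` is nondegenerate. -/
def IsNondegOn (B : LinearMap.BilinForm ℝ V) (W : Submodule ℝ V) : Prop :=
  ∀ x ∈ W, (∀ y ∈ W, B x y = 0) → x = 0

/-- Weak irreducibility: no proper nonzero invariant nondegenerate subspace. -/
def WeaklyIrred (B : LinearMap.BilinForm ℝ V) (g : Set (Module.End ℝ V)) : Prop :=
  ∀ W : Submodule ℝ V, Invariant g W → IsNondegOn B W → W = ⊥ ∨ W = ⊤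

/-- Irreducibility: no proper nonzero invariant subspace. -/
def Irred (g : Set (Module.End ℝ V)) : Prop :=
  ∀ W : Submodule ℝ V, Invariant g W → W = ⊥ ∨ W = ⊤

/-- The Euclidean dot product on `Fin n → ℝ`. -/
def dotE (n : ℕ) : LinearMap.BilinForm ℝ (Fin n → ℝ) :=
  LinearMap.mk₂ ℝ (fun x y => ∑ i, x i * y i)
    (fun x x' y => by simp [add_mul, Finset.sum_add_distrib])
    (fun c x y => by simp [Finset.mul_sum, mul_assoc])
    (fun x y y' => by simp [mul_add, Finset.sum_add_distrib])
    (fun c x y => by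
      simp only [Pi.smul_apply, smul_eq_mul, Finset.mul_sum]
      exact Finset.sum_congr rfl fun i _ => by ring)

/-- Minkowski space `ℝ^{1,n+1}` in Witt coordinates: the vector `(v, x, u)`
represents `v·p + x + u·q` with respect to a Witt basis `p, e₁, …, eₙ, q`. -/
abbrev Mink (n : ℕ) := ℝ × (Fin n → ℝ) × ℝ

/-- The Minkowski metric in Witt coordinates: `p, q` are isotropic, `(p,q) = 1`,
and the form is the Euclidean one on the `ℝⁿ`-part orthogonal to `p` and `q`. -/
def minkB (n : ℕ) : LinearMap.BilinForm ℝ (Mink n) :=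
  LinearMap.mk₂ ℝ (fun X Y => X.1 * Y.2.2 + X.2.2 * Y.1 + dotE n X.2.1 Y.2.1)
    (fun X X' Y => by
      simp only [Prod.fst_add, Prod.snd_add, Pi.add_apply, map_add,
        LinearMap.add_apply]
      ring)
    (fun c X Y => by
      simp only [Prod.smul_fst, Prod.smul_snd, smul_eq_mul, map_smul,
        LinearMap.smul_apply]
      ring)
    (fun X Y Y' => by
      simp only [Prod.fst_add, Prod.snd_add, Pi.add_apply, map_add,
        LinearMap.add_apply]
      ring)
    (fun c X Y => by
      simp only [Prod.smul_fst, Prod.smul_snd, smul_eq_mul, map_smul,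
        LinearMap.smul_apply]
      ring)

/-- The Witt basis vector `p`. -/
def pvec (n : ℕ) : Mink n := (1, 0, 0)

/-- The Witt basis vector `q`. -/
def qvec (n : ℕ) : Mink n := (0, 0, 1)

/-- The embedding of `ℝⁿ` into Minkowski space. -/
def emb {n : ℕ} (x : Fin n → ℝ) : Mink n := (0, x, 0)

/-- The element `(b, a, A, X) = b·id + (a, A, X)` of `co(1,n+1)_{ℝp}`:
it maps `p ↦ (a+b)·p`, `U ↦ (X,U)·p + A U + b·U` for `U ∈ ℝⁿ`, and
`q ↦ −X + (b−a)·q`. -/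
def coElem {n : ℕ} (b a : ℝ) (A : Module.End ℝ (Fin n → ℝ)) (X : Fin n → ℝ) :
    Module.End ℝ (Mink n) where
  toFun w := ((b + a) * w.1 + dotE n X w.2.1,
              b • w.2.1 + A w.2.1 - w.2.2 • X,
              (b - a) * w.2.2)
  map_add' w w' := by
    simp only [Prod.fst_add, Prod.snd_add, map_add, Prod.mk_add_mk, add_smul]
    refine Prod.ext (by ring) (Prod.ext ?_ (by ring))
    simp only [smul_add]
    abel
  map_smul' c w := by
    simp only [Prod.smul_fst, Prod.smul_snd, smul_eq_mul, map_smul,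
      RingHom.id_apply, Prod.smul_mk]
    refine Prod.ext (by simp; ring) (Prod.ext ?_ (by simp; ring))
    simp only [smul_smul, smul_sub, LinearMap.map_smul]
    rw [mul_comm]
    module

/-- The Lie algebra `so(n)` of skew-symmetric endomorphisms of Euclidean `ℝⁿ`. -/
def soE (n : ℕ) : Set (Module.End ℝ (Fin n → ℝ)) := soSet (dotE n)

/-- The subalgebra `co(1,n+1)_{ℝp}` of `co(1,n+1)` preserving the isotropic line `ℝp`,
whose elements are written `(b, a, A, X)`. -/
def coRp (n : ℕ) : Set (Module.End ℝ (Mink n)) :=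
  {F | ∃ b a : ℝ, ∃ A ∈ soE n, ∃ X : Fin n → ℝ, F = coElem b a A X}

/-- The orthogonal complement of a subspace of Euclidean `ℝⁿ`. -/
def OC (n : ℕ) (W : Submodule ℝ (Fin n → ℝ)) : Submodule ℝ (Fin n → ℝ) where
  carrier := {y | ∀ x ∈ W, dotE n y x = 0}
  zero_mem' := fun x _ => by simp
  add_mem' := by
    intro a b ha hb x hx
    rw [map_add, LinearMap.add_apply, ha x hx, hb x hx, add_zero]
  smul_mem' := by
    intro c y hy x hx
    rw [map_smul, LinearMap.smul_apply, hy x hx, smul_zero]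

/-- The subalgebra `so(1,n+1)_{ℝp}` of `so(1,n+1)` preserving the isotropic
line `ℝp`, with elements written `(a, A, X)`. -/
def soRp (n : ℕ) : Set (Module.End ℝ (Mink n)) :=
  {F | ∃ a : ℝ, ∃ A ∈ soE n, ∃ X : Fin n → ℝ, F = coElem 0 a A X}

/-!
Let `E` be the space of pure translations `(0, 0, X)` in `𝔤`, and let `𝔥` be the projection of `𝔤`
to `so(n)`. Modulo `E` the translation part of an element is a `1`-cocycle with values in `E^⊥`, and
changing the Witt basis by a vector `x₀` changes it by a coboundary. If `U ⊆ ℝⁿ` is `𝔥`-invariant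
and orthogonal to all translation parts in the Witt basis through `x₀`, then
`{y - (x₀, y) p : y ∈ U}` is an invariant Euclidean subspace, so weak irreducibility forces `U = 0`.

If some `F₀ = (a, A, X)` in `𝔤` has `a ≠ 0`, choose `x₀` so that its translation part vanishes.
Bracketing with `F₀` acts on `E^⊥` as `a + A` and on `so(n)` as the skew operator `ad A`, so the
cocycle vanishes; hence `E = ℝⁿ` and `𝔤` is of type 1 or 3. If there is no such `F₀`, the Casimir
operator of an invariant inner product on `𝔥` makes the cocycle a coboundary up to `𝔥`-invariant
vectors; hence `𝔥` kills `E^⊥`, the cocycle maps onto `E^⊥`, and `𝔤` is of type 4, type 2 being the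
case `E = ℝⁿ`.

Conversely, applying the translations of `𝔤` to an invariant subspace `W` shows that `W` is
everything as soon as it is not orthogonal to `p`, and that otherwise it is degenerate or zero.
-/

attribute [local instance] LieRing.ofAssociativeRing

/-- A real inner product, unbundled: a symmetric positive definite bilinear form. The norm of
`Fin n → ℝ` is the sup norm, so `InnerProductSpace` is not available for the forms used here. -/
structure IsInnerProduct (B : LinearMap.BilinForm ℝ V) : Prop where
  symm : B.IsSymm
  pos : ∀ x, x ≠ 0 → 0 < B x x

namespace IsInnerProduct

variable {B : LinearMap.BilinForm ℝ V}

lemma apply_comm (hB : IsInnerProduct B) (x y : V) : B x y = B y x :=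
  hB.symm.eq x y

lemma apply_self_nonneg (hB : IsInnerProduct B) (x : V) : 0 ≤ B x x := by
  rcases eq_or_ne x 0 with rfl | hx
  · simp
  · exact (hB.pos x hx).le

lemma apply_self_eq_zero (hB : IsInnerProduct B) {x : V} : B x x = 0 ↔ x = 0 :=
  ⟨fun h => by_contra fun hx => (hB.pos x hx).ne' h, fun h => by simp [h]⟩

lemma forall_eq_zero_of_sum_eq_zero (hB : IsInnerProduct B) {ι : Type*} [Fintype ι] {v : ι → V}
    (h : ∑ i, B (v i) (v i) = 0) (i : ι) : v i = 0 :=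
  hB.apply_self_eq_zero.1 <|
    (Finset.sum_eq_zero_iff_of_nonneg fun i _ => hB.apply_self_nonneg (v i)).1 h i
      (Finset.mem_univ i)

lemma apply_self_eq_zero_of_skew (hB : IsInnerProduct B) {A : Module.End ℝ V} (hA : A ∈ soSet B)
    (x : V) : B x (A x) = 0 := by
  have h := hA x x
  rw [hB.apply_comm (A x) x] at h
  linarith

lemma injective_smul_add_of_skew (hB : IsInnerProduct B) {A : Module.End ℝ V} (hA : A ∈ soSet B)
    {a : ℝ} (ha : a ≠ 0) : Function.Injective (a • 1 + A : Module.End ℝ V) := by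
  rw [injective_iff_map_eq_zero]
  intro x hx
  have h : a * B x x = 0 := by
    simpa [hB.apply_self_eq_zero_of_skew hA] using congrArg (B x) hx
  exact hB.apply_self_eq_zero.1 ((mul_eq_zero.1 h).resolve_left ha)

variable [FiniteDimensional ℝ V]

lemma isCompl_orthogonal (hB : IsInnerProduct B) (W : Submodule ℝ V) :
    IsCompl W (B.orthogonal W) := by
  rw [LinearMap.BilinForm.isCompl_orthogonal_iff_disjoint hB.symm.isRefl, Submodule.disjoint_def]
  exact fun x hx hx' => hB.apply_self_eq_zero.1 (hx' x hx)

lemma exists_orthonormal_basis (hB : IsInnerProduct B) :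
    ∃ b : Basis (Fin (finrank ℝ V)) ℝ V, ∀ i j, B (b i) (b j) = if i = j then 1 else 0 := by
  let core : InnerProductSpace.Core ℝ V :=
    { inner := fun x y => B x y
      conj_inner_symm := fun x y => hB.apply_comm y x
      re_inner_nonneg := hB.apply_self_nonneg
      add_left := fun x y z => by simp
      smul_left := fun x y r => by simp
      definite := fun x => hB.apply_self_eq_zero.1 }
  let : NormedAddCommGroup V := core.toNormedAddCommGroup
  let : InnerProductSpace ℝ V := InnerProductSpace.ofCore core.toCore
  let b := stdOrthonormalBasis ℝ V
  refine ⟨b.toBasis, fun i j => ?_⟩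
  rw [b.coe_toBasis]
  exact orthonormal_iff_ite.1 b.orthonormal i j

end IsInnerProduct

section OrthonormalBasis

variable {B : LinearMap.BilinForm ℝ V} {ι : Type*} [DecidableEq ι] {b : Basis ι ℝ V}

lemma apply_basis_eq_coord (hb : ∀ i j, B (b i) (b j) = if i = j then 1 else 0) (i : ι) :
    B (b i) = b.coord i :=
  b.ext fun j => by simp [hb, Finsupp.single_apply, eq_comm]

variable [Fintype ι]

lemma sum_apply_smul_basis (hb : ∀ i j, B (b i) (b j) = if i = j then 1 else 0) (x : V) :
    ∑ i, B (b i) x • b i = x := by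
  simp only [apply_basis_eq_coord hb, b.coord_apply, b.sum_repr]

lemma trace_eq_sum_apply_basis (hb : ∀ i j, B (b i) (b j) = if i = j then 1 else 0)
    (A : Module.End ℝ V) : LinearMap.trace ℝ V A = ∑ i, B (b i) (A (b i)) := by
  rw [LinearMap.trace_eq_matrix_trace ℝ b, Matrix.trace]
  refine Finset.sum_congr rfl fun i _ => ?_
  rw [Matrix.diag_apply, LinearMap.toMatrix_apply, apply_basis_eq_coord hb,
    b.coord_apply]

/- The tensor `∑ i, b i ⊗ b i` does not depend on the orthonormal basis, so the orthogonal group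
fixes it and the Lie algebra `so(B)` annihilates it. -/
lemma sum_basis_skew_eq_zero (hB : B.IsSymm)
    (hb : ∀ i j, B (b i) (b j) = if i = j then 1 else 0) {N : Type*} [AddCommGroup N] [Module ℝ N]
    {D : Module.End ℝ V} (hD : D ∈ soSet B) (β : V →ₗ[ℝ] V →ₗ[ℝ] N) :
    ∑ i, (β (D (b i)) (b i) + β (b i) (D (b i))) = 0 := by
  have expand (i : ι) : D (b i) = ∑ j, B (b j) (D (b i)) • b j :=
    (sum_apply_smul_basis hb _).symm
  have left : ∑ i, β (D (b i)) (b i) = ∑ i, ∑ j, B (b j) (D (b i)) • β (b j) (b i) :=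
    Finset.sum_congr rfl fun i _ => by nth_rw 1 [expand i]; simp
  have right : ∑ i, β (b i) (D (b i)) = ∑ i, ∑ j, B (b i) (D (b j)) • β (b j) (b i) := by
    rw [Finset.sum_comm]
    exact Finset.sum_congr rfl fun i _ => by nth_rw 1 [expand i]; simp
  have skew (i j : ι) : B (b j) (D (b i)) + B (b i) (D (b j)) = 0 := by
    have symm : B (D (b i)) (b j) = B (b j) (D (b i)) := hB.eq _ _
    rw [← symm, hD]
  simp_rw [Finset.sum_add_distrib, left, right, ← Finset.sum_add_distrib, ← add_smul, skew,
    zero_smul, Finset.sum_const_zero]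

end OrthonormalBasis

section Intertwining

variable {W : Type*} [AddCommGroup W] [Module ℝ W] [FiniteDimensional ℝ W]
  {κ : LinearMap.BilinForm ℝ W} {B : LinearMap.BilinForm ℝ V}

lemma eq_zero_of_comp_skew_eq (hκ : IsInnerProduct κ) (hB : IsInnerProduct B) {D : Module.End ℝ W}
    (hD : D ∈ soSet κ) {S : Module.End ℝ V} (hS : S ∈ soSet B) {a : ℝ} (ha : a ≠ 0)
    {f : W →ₗ[ℝ] V} (hf : f ∘ₗ D = (a • 1 + S) ∘ₗ f) : f = 0 := by
  obtain ⟨b, hb⟩ := hκ.exists_orthonormal_basis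
  have comm (x : W) : f (D x) = a • f x + S (f x) := LinearMap.congr_fun hf x
  have sum_eq : ∑ i, B (f (b i)) (f (b i)) = 0 := by
    have h := sum_basis_skew_eq_zero hκ.symm hb hD (B.compl₁₂ f f)
    have term (x : W) : B (f (D x)) (f x) + B (f x) (f (D x)) = 2 * a * B (f x) (f x) := by
      rw [hB.apply_comm (f (D x)), comm, map_add, map_smul, hB.apply_self_eq_zero_of_skew hS,
        smul_eq_mul]
      ring
    simp only [LinearMap.compl₁₂_apply, term, ← Finset.mul_sum] at h
    simpa [ha] using h
  exact b.ext fun i => hB.forall_eq_zero_of_sum_eq_zero sum_eq i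

end Intertwining

section TraceForm

lemma neg_traceForm_lieInvariant (L : LieSubalgebra ℝ (Module.End ℝ V)) :
    (-LieModule.traceForm ℝ L V).lieInvariant L := fun A X Y =>
  congrArg Neg.neg (LieModule.traceForm_lieInvariant ℝ L V A X Y)

variable [FiniteDimensional ℝ V] {B : LinearMap.BilinForm ℝ V}

lemma IsInnerProduct.trace_mul_self_neg (hB : IsInnerProduct B) {A : Module.End ℝ V}
    (hA : A ∈ soSet B) (hA0 : A ≠ 0) : LinearMap.trace ℝ V (A * A) < 0 := by
  obtain ⟨b, hb⟩ := hB.exists_orthonormal_basis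
  have trace_eq : LinearMap.trace ℝ V (A * A) = -∑ i, B (A (b i)) (A (b i)) := by
    rw [trace_eq_sum_apply_basis hb, ← Finset.sum_neg_distrib]
    exact Finset.sum_congr rfl fun i _ => eq_neg_of_add_eq_zero_right (hA (b i) (A (b i)))
  have nonneg : 0 ≤ ∑ i, B (A (b i)) (A (b i)) :=
    Finset.sum_nonneg fun i _ => hB.apply_self_nonneg (A (b i))
  refine lt_of_le_of_ne (by linarith) fun h => hA0 (b.ext fun i => ?_)
  exact hB.forall_eq_zero_of_sum_eq_zero (v := A ∘ b) (by simpa [trace_eq] using h) i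

lemma isInnerProduct_neg_traceForm_restrict (hB : IsInnerProduct B)
    {U : Submodule ℝ (Module.End ℝ V)} (hU : (U : Set (Module.End ℝ V)) ⊆ soSet B) :
    IsInnerProduct ((-LieModule.traceForm ℝ (Module.End ℝ V) V).restrict U) where
  symm := ⟨fun A A' => congrArg Neg.neg (LieModule.traceForm_comm ℝ (Module.End ℝ V) V A A')⟩
  pos A hA := neg_pos.2 <| hB.trace_mul_self_neg (hU A.2) (by simpa using hA)

lemma isInnerProduct_neg_traceForm (hB : IsInnerProduct B)
    {L : LieSubalgebra ℝ (Module.End ℝ V)} (hL : (L : Set (Module.End ℝ V)) ⊆ soSet B) :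
    IsInnerProduct (-LieModule.traceForm ℝ L V) :=
  isInnerProduct_neg_traceForm_restrict hB hL

lemma map_eq_zero_of_map_lie_eq_smul_add (hB : IsInnerProduct B)
    {U : Submodule ℝ (Module.End ℝ V)} (hU : (U : Set (Module.End ℝ V)) ⊆ soSet B)
    {S : Module.End ℝ V} (hS : S ∈ soSet B) (hSU : ∀ A ∈ U, ⁅S, A⁆ ∈ U) {a : ℝ} (ha : a ≠ 0)
    {f : Module.End ℝ V →ₗ[ℝ] V} (hf : ∀ A ∈ U, f ⁅S, A⁆ = a • f A + S (f A))
    {A : Module.End ℝ V} (hA : A ∈ U) : f A = 0 := by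
  let D : Module.End ℝ U := (LieAlgebra.ad ℝ (Module.End ℝ V) S).restrict hSU
  have hD : D ∈ soSet ((-LieModule.traceForm ℝ (Module.End ℝ V) V).restrict U) := fun A A' => by
    have h := LieModule.traceForm_lieInvariant ℝ (Module.End ℝ V) V S A A'
    change -LieModule.traceForm ℝ (Module.End ℝ V) V ⁅S, A.1⁆ A'.1 +
      -LieModule.traceForm ℝ (Module.End ℝ V) V A.1 ⁅S, A'.1⁆ = 0
    rw [h]
    ring
  have h : f ∘ₗ U.subtype = 0 :=
    eq_zero_of_comp_skew_eq (isInnerProduct_neg_traceForm_restrict hB hU) hB hD hS ha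
      (LinearMap.ext fun A => hf A A.2)
  exact LinearMap.congr_fun h ⟨A, hA⟩

end TraceForm

section InvariantInnerProduct

variable {L : Type*} [LieRing L] [LieAlgebra ℝ L]

section Center

variable [FiniteDimensional ℝ L] {κ : LinearMap.BilinForm ℝ L}

lemma exists_mem_center_map_eq (hκ : IsInnerProduct κ) (hinv : κ.lieInvariant L)
    {N : Type*} [AddCommGroup N] [Module ℝ N] {ψ : L →ₗ[ℝ] N}
    (hψ : ∀ x y : L, ψ ⁅x, y⁆ = 0) (x : L) : ∃ z ∈ LieAlgebra.center ℝ L, ψ z = ψ x := by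
  let S : Submodule ℝ L := Submodule.span ℝ {z | ∃ x y : L, z = ⁅x, y⁆}
  have hS : S ≤ LinearMap.ker ψ := Submodule.span_le.2 <| by
    rintro _ ⟨x, y, rfl⟩
    exact hψ x y
  obtain ⟨s, hs, z, hz, rfl⟩ := Submodule.mem_sup.1
    ((hκ.isCompl_orthogonal S).sup_eq_top ▸ Submodule.mem_top : x ∈ S ⊔ κ.orthogonal S)
  refine ⟨z, fun y => hκ.apply_self_eq_zero.1 ?_, by rw [map_add, hS hs, zero_add]⟩
  have h : κ ⁅y, ⁅y, z⁆⁆ z = 0 := hz _ (Submodule.subset_span ⟨_, _, rfl⟩)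
  rwa [hinv, neg_eq_zero] at h

end Center

variable {M : Type*} [AddCommGroup M] [Module ℝ M] [LieRingModule L M] [LieModule ℝ L M]
  {ι : Type*} [Fintype ι]

/-- The Casimir operator `m ↦ ∑ i, ⁅b i, ⁅b i, m⁆⁆` of an orthonormal basis of `L`. -/
def casimir (M : Type*) [AddCommGroup M] [Module ℝ M] [LieRingModule L M] [LieModule ℝ L M]
    (b : Basis ι ℝ L) : Module.End ℝ M :=
  ∑ i, LieModule.toEnd ℝ L M (b i) * LieModule.toEnd ℝ L M (b i)

lemma casimir_apply (b : Basis ι ℝ L) (m : M) : casimir M b m = ∑ i, ⁅b i, ⁅b i, m⁆⁆ := by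
  simp [casimir]

lemma casimir_derivation_apply [DecidableEq ι] {κ : LinearMap.BilinForm ℝ L} (hκ : κ.IsSymm)
    (hinv : κ.lieInvariant L) {b : Basis ι ℝ L}
    (hb : ∀ i j, κ (b i) (b j) = if i = j then 1 else 0) (D : LieDerivation ℝ L M) (x : L) :
    casimir M b (D x) = ⁅x, ∑ i, ⁅b i, D (b i)⁆⁆ := by
  have skew : LieAlgebra.ad ℝ L x ∈ soSet κ := fun y z => by
    rw [LieAlgebra.ad_apply, hinv, LieAlgebra.ad_apply, neg_add_cancel]
  have invariance := sum_basis_skew_eq_zero hκ hb skew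
    ((LieModule.toEnd ℝ L M : L →ₗ[ℝ] Module.End ℝ M).compl₂ (D : L →ₗ[ℝ] M))
  have leibniz (y : L) : ⁅x, ⁅y, D y⁆⁆ = ⁅⁅x, y⁆, D y⁆ + ⁅y, D ⁅x, y⁆⁆ + ⁅y, ⁅y, D x⁆⁆ := by
    rw [leibniz_lie, D.apply_lie_eq_sub, lie_sub]
    abel
  have invariance' : ∑ i, (⁅⁅x, b i⁆, D (b i)⁆ + ⁅b i, D ⁅x, b i⁆⁆) = 0 := by
    simpa using invariance
  rw [casimir_apply, lie_sum, Finset.sum_congr rfl fun i _ => leibniz (b i),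
    Finset.sum_add_distrib, invariance', zero_add]

variable {B : LinearMap.BilinForm ℝ M}

lemma lie_eq_zero_of_apply_casimir_self_eq_zero (hB : IsInnerProduct B) (hinv : B.lieInvariant L)
    (b : Basis ι ℝ L) {m : M} (hm : B (casimir M b m) m = 0) (x : L) : ⁅x, m⁆ = 0 := by
  have sum_eq : ∑ i, B ⁅b i, m⁆ ⁅b i, m⁆ = 0 := by
    rw [casimir_apply, map_sum, LinearMap.sum_apply] at hm
    simpa only [hinv _ _ m, Finset.sum_neg_distrib, neg_eq_zero] using hm
  have h : (LieModule.toEnd ℝ L M : L →ₗ[ℝ] Module.End ℝ M).flip m = 0 :=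
    b.ext fun i => hB.forall_eq_zero_of_sum_eq_zero sum_eq i
  exact LinearMap.congr_fun h x

variable [FiniteDimensional ℝ M]

lemma sum_lie_derivation_mem_range_casimir (hB : IsInnerProduct B) (hinv : B.lieInvariant L)
    (b : Basis ι ℝ L) (D : L → M) : ∑ i, ⁅b i, D (b i)⁆ ∈ LinearMap.range (casimir M b) := by
  have top := (hB.isCompl_orthogonal (LinearMap.range (casimir M b))).sup_eq_top
  obtain ⟨_, ⟨m, rfl⟩, r, hr, h⟩ := Submodule.mem_sup.1
    (top ▸ Submodule.mem_top (x := ∑ i, ⁅b i, D (b i)⁆))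
  have invariant (x : L) : ⁅x, r⁆ = 0 :=
    lie_eq_zero_of_apply_casimir_self_eq_zero hB hinv b (hr _ ⟨r, rfl⟩) x
  have hsum : B (∑ i, ⁅b i, D (b i)⁆) r = 0 := by
    simp [hinv _ _ r, invariant]
  rw [← h, map_add, LinearMap.add_apply, hr _ ⟨m, rfl⟩, zero_add, hB.apply_self_eq_zero] at hsum
  exact ⟨m, by rw [← h, hsum, add_zero]⟩

/- Whitehead's argument for the first cohomology, in the reductive case: the Casimir operator
commutes with the action, so a cocycle is a coboundary up to its kernel, the invariants. -/
lemma exists_lie_derivation_sub_lie_eq_zero [FiniteDimensional ℝ L] {κ : LinearMap.BilinForm ℝ L}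
    (hκ : IsInnerProduct κ) (hκinv : κ.lieInvariant L) (hB : IsInnerProduct B)
    (hBinv : B.lieInvariant L) (D : LieDerivation ℝ L M) :
    ∃ m : M, ∀ x y : L, ⁅y, D x - ⁅x, m⁆⁆ = 0 := by
  obtain ⟨b, hb⟩ := hκ.exists_orthonormal_basis
  obtain ⟨m, hm⟩ := sum_lie_derivation_mem_range_casimir hB hBinv b D
  refine ⟨m, fun x => lie_eq_zero_of_apply_casimir_self_eq_zero hB hBinv b ?_⟩
  have h := casimir_derivation_apply hκ.symm hκinv hb (D - LieDerivation.inner ℝ L M m) x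
  have hzero : ∑ i, ⁅b i, (D - LieDerivation.inner ℝ L M m) (b i)⁆ = 0 := by
    simp [← hm, casimir_apply]
  rw [hzero, lie_zero] at h
  have : casimir M b (D x - ⁅x, m⁆) = 0 := by simpa using h
  rw [this, map_zero, LinearMap.zero_apply]

end InvariantInnerProduct

lemma exists_forall_mem_comp_eq {K U M N : Type*} [Field K] [AddCommGroup U] [Module K U]
    [AddCommGroup M] [Module K M] [AddCommGroup N] [Module K N] {p : Submodule K U} {f : U →ₗ[K] M}
    {g : U →ₗ[K] N} (h : ∀ x ∈ p, f x = 0 → g x = 0) : ∃ c : M →ₗ[K] N, ∀ x ∈ p, c (f x) = g x := by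
  have ker_le : LinearMap.ker (f.domRestrict p) ≤ LinearMap.ker (g.domRestrict p) :=
    fun x hx => h x x.2 hx
  obtain ⟨c, hc⟩ := LinearMap.exists_extend
    ((LinearMap.ker (f.domRestrict p)).liftQ (g.domRestrict p) ker_le ∘ₗ
      (f.domRestrict p).quotKerEquivRange.symm.toLinearMap)
  refine ⟨c, fun x hx => ?_⟩
  have symm_apply := (f.domRestrict p).quotKerEquivRange_symm_apply_image ⟨x, hx⟩ ⟨_, rfl⟩
  have h' := LinearMap.congr_fun hc ((f.domRestrict p).rangeRestrict ⟨x, hx⟩)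
  rw [LinearMap.comp_apply, LinearMap.comp_apply, LinearEquiv.coe_coe] at h'
  exact h'.trans (congrArg _ symm_apply)

section LieSubalgebra

lemma IsLieSub.exists_lieSubalgebra {g : Set (Module.End ℝ V)} (hg : IsLieSub g) :
    ∃ G : LieSubalgebra ℝ (Module.End ℝ V), (G : Set (Module.End ℝ V)) = g :=
  ⟨{ carrier := g
     zero_mem' := hg.1
     add_mem' := fun hF hF' => hg.2.1 _ hF _ hF'
     smul_mem' := fun c _ hF => hg.2.2.1 c _ hF
     lie_mem' := fun hF hF' => hg.2.2.2 _ hF _ hF' }, rfl⟩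

lemma isLieSub_coe (L : LieSubalgebra ℝ (Module.End ℝ V)) : IsLieSub (L : Set (Module.End ℝ V)) :=
  ⟨L.zero_mem, fun _ hF _ hF' => L.add_mem hF hF', fun c _ hF => L.smul_mem c hF,
    fun _ hF _ hF' => L.lie_mem hF hF'⟩

/-- The center of a Lie algebra of endomorphisms, as a subspace of the space of all
endomorphisms. -/
def centerSubmodule (L : LieSubalgebra ℝ (Module.End ℝ V)) : Submodule ℝ (Module.End ℝ V) :=
  (LieAlgebra.center ℝ L).toSubmodule.map L.toSubmodule.subtype

lemma mem_centerSubmodule {L : LieSubalgebra ℝ (Module.End ℝ V)} {A : Module.End ℝ V} :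
    A ∈ centerSubmodule L ↔ A ∈ L ∧ ∀ A' ∈ L, A * A' = A' * A := by
  constructor
  · rintro ⟨A, hA, rfl⟩
    exact ⟨A.2, fun A' hA' => (sub_eq_zero.1 (congrArg Subtype.val (hA ⟨A', hA'⟩))).symm⟩
  · rintro ⟨hA, h⟩
    exact ⟨⟨A, hA⟩, fun A' => Subtype.ext (sub_eq_zero.2 (h A' A'.2).symm), rfl⟩

lemma exists_mem_centerSubmodule_map_eq [FiniteDimensional ℝ V] {B : LinearMap.BilinForm ℝ V}
    (hB : IsInnerProduct B) {L : LieSubalgebra ℝ (Module.End ℝ V)}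
    (hL : (L : Set (Module.End ℝ V)) ⊆ soSet B) {N : Type*} [AddCommGroup N] [Module ℝ N]
    {ψ : Module.End ℝ V →ₗ[ℝ] N} (hψ : ∀ A ∈ L, ∀ A' ∈ L, ψ ⁅A, A'⁆ = 0) {A : Module.End ℝ V}
    (hA : A ∈ L) : ∃ z ∈ centerSubmodule L, ψ z = ψ A := by
  obtain ⟨z, hz, h⟩ := exists_mem_center_map_eq (isInnerProduct_neg_traceForm hB hL)
    (neg_traceForm_lieInvariant L) (ψ := ψ ∘ₗ L.toSubmodule.subtype)
    (fun x y => hψ x x.2 y y.2) ⟨A, hA⟩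
  exact ⟨z, ⟨z, hz, rfl⟩, h⟩

end LieSubalgebra

section Euclidean

variable {n : ℕ}

lemma isInnerProduct_dotE (n : ℕ) : IsInnerProduct (dotE n) where
  symm := ⟨fun x y => by simp [dotE, mul_comm]⟩
  pos x hx := by
    obtain ⟨i, hi⟩ := Function.ne_iff.1 hx
    exact Finset.sum_pos' (fun j _ => mul_self_nonneg (x j))
      ⟨i, Finset.mem_univ i, mul_self_pos.2 hi⟩

lemma OC_eq_orthogonal (E : Submodule ℝ (Fin n → ℝ)) : OC n E = (dotE n).orthogonal E := by
  ext y
  exact forall₂_congr fun x _ => by rw [(isInnerProduct_dotE n).apply_comm y x]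

lemma isCompl_OC (E : Submodule ℝ (Fin n → ℝ)) : IsCompl E (OC n E) :=
  OC_eq_orthogonal E ▸ (isInnerProduct_dotE n).isCompl_orthogonal E

lemma eq_top_of_OC_eq_bot {E : Submodule ℝ (Fin n → ℝ)} (h : OC n E = ⊥) : E = ⊤ := by
  simpa [h] using (isCompl_OC E).sup_eq_top

lemma OC_apply_mem {E : Submodule ℝ (Fin n → ℝ)} {A : Module.End ℝ (Fin n → ℝ)} (hA : A ∈ soE n)
    (hE : ∀ x ∈ E, A x ∈ E) {y : Fin n → ℝ} (hy : y ∈ OC n E) : A y ∈ OC n E := fun x hx => by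
  rw [eq_neg_of_add_eq_zero_left (hA y x), hy _ (hE x hx), neg_zero]

/-- The orthogonal projection of Euclidean `ℝⁿ` onto `OC n E`. -/
def projOC (E : Submodule ℝ (Fin n → ℝ)) : Module.End ℝ (Fin n → ℝ) :=
  (OC n E).projection E (isCompl_OC E).symm

lemma projOC_mem (E : Submodule ℝ (Fin n → ℝ)) (x : Fin n → ℝ) : projOC E x ∈ OC n E :=
  Submodule.projection_apply_mem _ x

lemma projOC_eq_zero_iff {E : Submodule ℝ (Fin n → ℝ)} {x : Fin n → ℝ} :
    projOC E x = 0 ↔ x ∈ E :=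
  Submodule.projection_apply_eq_zero_iff _

lemma sub_projOC_mem (E : Submodule ℝ (Fin n → ℝ)) (x : Fin n → ℝ) : x - projOC E x ∈ E :=
  Submodule.sub_projection_mem _ x

lemma projOC_apply_comm {E : Submodule ℝ (Fin n → ℝ)} {A : Module.End ℝ (Fin n → ℝ)}
    (hA : A ∈ soE n) (hE : ∀ x ∈ E, A x ∈ E) (x : Fin n → ℝ) :
    projOC E (A x) = A (projOC E x) := by
  have h : projOC E (A (x - projOC E x)) = 0 := projOC_eq_zero_iff.2 (hE _ (sub_projOC_mem E x))
  rw [map_sub, map_sub, sub_eq_zero] at h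
  exact h.trans
    (Submodule.projection_apply_of_mem_left _ (OC_apply_mem hA hE (projOC_mem E x)))

end Euclidean

section Parts

variable {n : ℕ}

lemma coElem_zero_apply (a : ℝ) (A : Module.End ℝ (Fin n → ℝ)) (X : Fin n → ℝ) (w : Mink n) :
    coElem 0 a A X w = (a * w.1 + dotE n X w.2.1, A w.2.1 - w.2.2 • X, -(a * w.2.2)) := by
  simp [coElem]

lemma coElem_zero_add (a b : ℝ) (A B : Module.End ℝ (Fin n → ℝ)) (X Y : Fin n → ℝ) :
    coElem 0 a A X + coElem 0 b B Y = coElem 0 (a + b) (A + B) (X + Y) := by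
  refine LinearMap.ext fun w => ?_
  simp only [LinearMap.add_apply, coElem_zero_apply, Prod.mk_add_mk, map_add, smul_add]
  refine Prod.ext (by ring) (Prod.ext ?_ (by ring))
  dsimp only
  abel

lemma smul_coElem_zero (c a : ℝ) (A : Module.End ℝ (Fin n → ℝ)) (X : Fin n → ℝ) :
    c • coElem 0 a A X = coElem 0 (c * a) (c • A) (c • X) := by
  refine LinearMap.ext fun w => ?_
  simp only [LinearMap.smul_apply, coElem_zero_apply, Prod.smul_mk, map_smul, smul_eq_mul,
    smul_sub, smul_comm c]
  refine Prod.ext (by ring) (Prod.ext rfl (by ring))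

lemma lie_coElem_zero {a b : ℝ} {A B : Module.End ℝ (Fin n → ℝ)} (hA : A ∈ soE n) (hB : B ∈ soE n)
    (X Y : Fin n → ℝ) :
    ⁅coElem 0 a A X, coElem 0 b B Y⁆ = coElem 0 0 ⁅A, B⁆ (a • Y + A Y - (b • X + B X)) := by
  refine LinearMap.ext fun w => ?_
  have hX := hB X w.2.1
  have hY := hA Y w.2.1
  simp only [LieRing.of_associative_ring_bracket, LinearMap.sub_apply, Module.End.mul_apply,
    coElem_zero_apply, map_sub, map_add, map_smul, LinearMap.add_apply, LinearMap.smul_apply,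
    smul_eq_mul, Prod.mk_sub_mk]
  refine Prod.ext ?_ (Prod.ext ?_ (by ring))
  · dsimp only
    rw [(isInnerProduct_dotE n).apply_comm X Y]
    linarith
  · dsimp only
    module

/-- The coefficient `a` of `(a, A, X)`, as a linear map. -/
def boostPart (n : ℕ) : Module.End ℝ (Mink n) →ₗ[ℝ] ℝ :=
  LinearMap.fst ℝ _ _ ∘ₗ LinearMap.applyₗ (pvec n)

/-- The coefficient `A` of `(a, A, X)`, as a linear map. -/
def rotPart (n : ℕ) : Module.End ℝ (Mink n) →ₗ[ℝ] Module.End ℝ (Fin n → ℝ) where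
  toFun F := LinearMap.fst ℝ _ _ ∘ₗ LinearMap.snd ℝ _ _ ∘ₗ F ∘ₗ
    LinearMap.inr ℝ _ _ ∘ₗ LinearMap.inl ℝ _ _
  map_add' _ _ := rfl
  map_smul' _ _ := rfl

/-- The coefficient `X` of `(a, A, X)`, as a linear map. -/
def transPart (n : ℕ) : Module.End ℝ (Mink n) →ₗ[ℝ] (Fin n → ℝ) :=
  -(LinearMap.fst ℝ _ _ ∘ₗ LinearMap.snd ℝ _ _ ∘ₗ LinearMap.applyₗ (qvec n))

@[simp] lemma boostPart_coElem (a : ℝ) (A : Module.End ℝ (Fin n → ℝ)) (X : Fin n → ℝ) :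
    boostPart n (coElem 0 a A X) = a := by
  simp [boostPart, coElem_zero_apply, pvec]

@[simp] lemma rotPart_coElem (a : ℝ) (A : Module.End ℝ (Fin n → ℝ)) (X : Fin n → ℝ) :
    rotPart n (coElem 0 a A X) = A :=
  LinearMap.ext fun x => by
    change (coElem 0 a A X (emb x)).2.1 = A x
    simp [coElem_zero_apply, emb]

@[simp] lemma transPart_coElem (a : ℝ) (A : Module.End ℝ (Fin n → ℝ)) (X : Fin n → ℝ) :
    transPart n (coElem 0 a A X) = X := by
  simp [transPart, coElem_zero_apply, qvec]

/-- The coefficient `X` of `(a, A, X)` in the Witt basis through `x₀`: the one containing `p` in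
which `q` is replaced by `q + x₀` modulo `p`. -/
def transPartAt (x₀ : Fin n → ℝ) : Module.End ℝ (Mink n) →ₗ[ℝ] (Fin n → ℝ) :=
  transPart n - (boostPart n).smulRight x₀ - (rotPart n).flip x₀

end Parts

section Subalgebra

variable {n : ℕ} {G : LieSubalgebra ℝ (Module.End ℝ (Mink n))}

lemma eq_coElem_of_mem_soRp {F : Module.End ℝ (Mink n)} (hF : F ∈ soRp n) :
    F = coElem 0 (boostPart n F) (rotPart n F) (transPart n F) := by
  obtain ⟨a, A, -, X, rfl⟩ := hF
  simp

lemma rotPart_mem_soE {F : Module.End ℝ (Mink n)} (hF : F ∈ soRp n) : rotPart n F ∈ soE n := by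
  obtain ⟨a, A, hA, X, rfl⟩ := hF
  simpa using hA

lemma boostPart_lie {F F' : Module.End ℝ (Mink n)} (hF : F ∈ soRp n) (hF' : F' ∈ soRp n) :
    boostPart n ⁅F, F'⁆ = 0 := by
  obtain ⟨a, A, hA, X, rfl⟩ := hF
  obtain ⟨b, B, hB, Y, rfl⟩ := hF'
  rw [lie_coElem_zero hA hB, boostPart_coElem]

lemma rotPart_lie {F F' : Module.End ℝ (Mink n)} (hF : F ∈ soRp n) (hF' : F' ∈ soRp n) :
    rotPart n ⁅F, F'⁆ = ⁅rotPart n F, rotPart n F'⁆ := by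
  obtain ⟨a, A, hA, X, rfl⟩ := hF
  obtain ⟨b, B, hB, Y, rfl⟩ := hF'
  rw [lie_coElem_zero hA hB]
  simp only [rotPart_coElem]

lemma transPartAt_apply (x₀ : Fin n → ℝ) (F : Module.End ℝ (Mink n)) :
    transPartAt x₀ F = transPart n F - boostPart n F • x₀ - rotPart n F x₀ :=
  rfl

lemma transPartAt_lie (x₀ : Fin n → ℝ) {F F' : Module.End ℝ (Mink n)} (hF : F ∈ soRp n)
    (hF' : F' ∈ soRp n) :
    transPartAt x₀ ⁅F, F'⁆ = boostPart n F • transPartAt x₀ F' + rotPart n F (transPartAt x₀ F') -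
      (boostPart n F' • transPartAt x₀ F + rotPart n F' (transPartAt x₀ F)) := by
  obtain ⟨a, A, hA, X, rfl⟩ := hF
  obtain ⟨b, B, hB, Y, rfl⟩ := hF'
  simp only [lie_coElem_zero hA hB, transPartAt_apply, transPart_coElem, boostPart_coElem,
    rotPart_coElem, LieRing.of_associative_ring_bracket, LinearMap.sub_apply,
    Module.End.mul_apply, map_sub, map_smul]
  module

/-- The subspace of all `X` with `(0, 0, X) ∈ G`. -/
def translations (G : LieSubalgebra ℝ (Module.End ℝ (Mink n))) : Submodule ℝ (Fin n → ℝ) where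
  carrier := {X | coElem 0 0 0 X ∈ G}
  zero_mem' := by
    have h : (coElem 0 0 0 0 : Module.End ℝ (Mink n)) = 0 := by
      simpa using (smul_coElem_zero 0 0 0 (0 : Fin n → ℝ)).symm
    simp [h]
  add_mem' {X Y} hX hY := by simpa [coElem_zero_add] using G.add_mem hX hY
  smul_mem' c X hX := by simpa [smul_coElem_zero] using G.smul_mem c hX

lemma mem_translations {X : Fin n → ℝ} : X ∈ translations G ↔ coElem 0 0 0 X ∈ G :=
  Iff.rfl

/-- The orthogonal part of `G`, the projection of `G` to `so(n)`. -/
def rotations (G : LieSubalgebra ℝ (Module.End ℝ (Mink n)))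
    (hG : (G : Set (Module.End ℝ (Mink n))) ⊆ soRp n) :
    LieSubalgebra ℝ (Module.End ℝ (Fin n → ℝ)) where
  __ := G.toSubmodule.map (rotPart n)
  lie_mem' := by
    rintro _ _ ⟨F, hF, rfl⟩ ⟨F', hF', rfl⟩
    exact ⟨⁅F, F'⁆, G.lie_mem hF hF', rotPart_lie (hG hF) (hG hF')⟩

lemma rotations_subset_soE (hG : (G : Set (Module.End ℝ (Mink n))) ⊆ soRp n) :
    (rotations G hG : Set (Module.End ℝ (Fin n → ℝ))) ⊆ soE n := by
  rintro _ ⟨F, hF, rfl⟩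
  exact rotPart_mem_soE (hG hF)

lemma rotPart_apply_mem_translations (hG : (G : Set (Module.End ℝ (Mink n))) ⊆ soRp n)
    {F : Module.End ℝ (Mink n)} (hF : F ∈ G) {X : Fin n → ℝ}
    (hX : X ∈ translations G) : rotPart n F X ∈ translations G := by
  have h : boostPart n F • X + rotPart n F X ∈ translations G := by
    have lie_mem := G.lie_mem hF hX
    have zero_mem : (0 : Module.End ℝ (Fin n → ℝ)) ∈ soE n := fun x y => by simp
    rw [eq_coElem_of_mem_soRp (hG hF), lie_coElem_zero (rotPart_mem_soE (hG hF)) zero_mem]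
      at lie_mem
    simpa [mem_translations] using lie_mem
  simpa using sub_mem h (Submodule.smul_mem _ (boostPart n F) hX)

lemma coElem_mem_iff (hG : (G : Set (Module.End ℝ (Mink n))) ⊆ soRp n)
    {F : Module.End ℝ (Mink n)} (hF : F ∈ G) {X : Fin n → ℝ} :
    coElem 0 (boostPart n F) (rotPart n F) X ∈ G ↔ X - transPart n F ∈ translations G := by
  have h : coElem 0 (boostPart n F) (rotPart n F) X = F + coElem 0 0 0 (X - transPart n F) := by
    conv_rhs => enter [1]; rw [eq_coElem_of_mem_soRp (hG hF)]
    rw [coElem_zero_add]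
    simp
  rw [h, mem_translations]
  exact ⟨fun hmem => by simpa using G.sub_mem hmem hF, G.add_mem hF⟩

lemma transPart_mem_translations (hG : (G : Set (Module.End ℝ (Mink n))) ⊆ soRp n)
    {F : Module.End ℝ (Mink n)} (hF : F ∈ G)
    (hboost : boostPart n F = 0) (hrot : rotPart n F = 0) : transPart n F ∈ translations G := by
  have h := eq_coElem_of_mem_soRp (hG hF)
  rw [hboost, hrot] at h
  exact mem_translations.2 (h ▸ hF)

lemma projOC_rotPart_apply (hG : (G : Set (Module.End ℝ (Mink n))) ⊆ soRp n)
    {F : Module.End ℝ (Mink n)} (hF : F ∈ G) (X : Fin n → ℝ) :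
    projOC (translations G) (rotPart n F X) = rotPart n F (projOC (translations G) X) :=
  projOC_apply_comm (rotPart_mem_soE (hG hF))
    (fun _ hY => rotPart_apply_mem_translations hG hF hY) X

/- The graph of `y ↦ -(x₀, y) p` over `U` is an invariant Euclidean subspace. -/
lemma eq_bot_of_rotPart_apply_mem (hG : (G : Set (Module.End ℝ (Mink n))) ⊆ soRp n)
    (hirr : WeaklyIrred (minkB n) (G : Set (Module.End ℝ (Mink n)))) (x₀ : Fin n → ℝ)
    {U : Submodule ℝ (Fin n → ℝ)} (hrot : ∀ F ∈ G, ∀ y ∈ U, rotPart n F y ∈ U)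
    (htrans : ∀ F ∈ G, ∀ y ∈ U, dotE n (transPartAt x₀ F) y = 0) : U = ⊥ := by
  let graph : (Fin n → ℝ) →ₗ[ℝ] Mink n := LinearMap.prod (-dotE n x₀) (LinearMap.inl ℝ _ _)
  have graph_apply (y : Fin n → ℝ) : graph y = (-dotE n x₀ y, y, 0) := rfl
  have invariant : Invariant (G : Set _) (U.map graph) := by
    rintro F hF _ ⟨y, hy, rfl⟩
    refine ⟨rotPart n F y, hrot F hF y hy, ?_⟩
    have h := htrans F hF y hy
    have skew := rotPart_mem_soE (hG hF) x₀ y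
    nth_rw 2 [eq_coElem_of_mem_soRp (hG hF)]
    rw [graph_apply, graph_apply, coElem_zero_apply]
    simp only [transPartAt_apply, map_sub, map_smul, LinearMap.sub_apply, LinearMap.smul_apply,
      smul_eq_mul] at h
    refine Prod.ext ?_ (by simp)
    dsimp only
    linarith
  have nondegenerate : IsNondegOn (minkB n) (U.map graph) := by
    rintro _ ⟨y, hy, rfl⟩ h
    have hyy : dotE n y y = 0 := by simpa [minkB, graph_apply] using h _ ⟨y, hy, rfl⟩
    rw [(isInnerProduct_dotE n).apply_self_eq_zero.1 hyy, map_zero]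
  rcases hirr _ invariant nondegenerate with h | h
  · refine (Submodule.eq_bot_iff U).2 fun y hy => ?_
    have hzero : graph y = 0 := (Submodule.mem_bot ℝ).1 (h ▸ Submodule.mem_map_of_mem hy)
    exact congrArg (fun w : Mink n => w.2.1) hzero
  · obtain ⟨y, -, hy⟩ : qvec n ∈ U.map graph := h ▸ Submodule.mem_top
    exact absurd (congrArg (fun w : Mink n => w.2.2) hy) (by simp [graph_apply, qvec])

end Subalgebra

section Types

variable {n : ℕ}

/-- `g` is the algebra `𝔤^{1,𝔥}`. -/
def IsTypeOne (h : Set (Module.End ℝ (Fin n → ℝ))) (g : Set (Module.End ℝ (Mink n))) : Prop :=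
  g = {F | ∃ a : ℝ, ∃ A ∈ h, ∃ X : Fin n → ℝ, F = coElem 0 a A X}

/-- `g` is the algebra `𝔤^{2,𝔥}`. -/
def IsTypeTwo (h : Set (Module.End ℝ (Fin n → ℝ))) (g : Set (Module.End ℝ (Mink n))) : Prop :=
  g = {F | ∃ A ∈ h, ∃ X : Fin n → ℝ, F = coElem 0 0 A X}

/-- `g` is an algebra `𝔤^{3,𝔥,φ}`. As in the classification theorem, `φ` is the restriction to `h`
of a linear form on all endomorphisms. -/
def IsTypeThree (h : Set (Module.End ℝ (Fin n → ℝ))) (g : Set (Module.End ℝ (Mink n))) : Prop :=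
  ∃ φ : Module.End ℝ (Fin n → ℝ) →ₗ[ℝ] ℝ,
    (∃ A ∈ h, A ≠ 0 ∧ ∀ B ∈ h, A * B = B * A) ∧
    (∀ A ∈ h, ∀ B ∈ h, φ (A * B - B * A) = 0) ∧ (∃ A ∈ h, φ A ≠ 0) ∧
    g = {F | ∃ A ∈ h, ∃ X : Fin n → ℝ, F = coElem 0 (φ A) A X}

/-- `g` is an algebra `𝔤^{4,𝔥,m,ψ}`, the subspaces `E` and `OC n E` playing the roles of `ℝᵐ` and
`ℝ^{n-m}`. As in the classification theorem, `ψ` is the restriction to `h` of a linear map on all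
endomorphisms. -/
def IsTypeFour (h : Set (Module.End ℝ (Fin n → ℝ))) (g : Set (Module.End ℝ (Mink n))) : Prop :=
  ∃ E : Submodule ℝ (Fin n → ℝ),
  ∃ ψ : Module.End ℝ (Fin n → ℝ) →ₗ[ℝ] (Fin n → ℝ),
    (∀ A ∈ h, ∀ x ∈ E, A x ∈ E) ∧ (∀ A ∈ h, ∀ y ∈ OC n E, A y = 0) ∧
    (∃ Zc : Submodule ℝ (Module.End ℝ (Fin n → ℝ)),
      (Zc : Set (Module.End ℝ (Fin n → ℝ))) = {A | A ∈ h ∧ ∀ B ∈ h, A * B = B * A} ∧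
      Module.finrank ℝ (OC n E) ≤ Module.finrank ℝ Zc) ∧
    (∀ A ∈ h, ψ A ∈ OC n E) ∧ (∀ y ∈ OC n E, ∃ A ∈ h, ψ A = y) ∧
    (∀ A ∈ h, ∀ B ∈ h, ψ (A * B - B * A) = 0) ∧
    g = {F | ∃ A ∈ h, ∃ X ∈ E, F = coElem 0 0 A (X + ψ A)}

end Types

section WithBoost

variable {n : ℕ} {G : LieSubalgebra ℝ (Module.End ℝ (Mink n))} {F₀ : Module.End ℝ (Mink n)}

lemma exists_transPartAt_eq_zero (hF₀ : F₀ ∈ soRp n) (hboost : boostPart n F₀ ≠ 0) :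
    ∃ x₀, transPartAt x₀ F₀ = 0 := by
  have injective := (isInnerProduct_dotE n).injective_smul_add_of_skew (rotPart_mem_soE hF₀) hboost
  obtain ⟨x₀, hx₀⟩ := LinearMap.injective_iff_surjective.1 injective (transPart n F₀)
  exact ⟨x₀, by rw [transPartAt_apply, ← hx₀]; simp⟩

/- By the cocycle identity, `ad F₀` acts on the transverse translation parts of the elements without
boost as `a + A`, where `F₀ = (a, A, 0)` in the Witt basis through `x₀`; on the rotation parts it
acts as the skew operator `ad A`. -/
lemma transPartAt_mem_translations_of_boostPart_eq_zero
    (hG : (G : Set (Module.End ℝ (Mink n))) ⊆ soRp n) (hF₀ : F₀ ∈ G) (hboost : boostPart n F₀ ≠ 0)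
    {x₀ : Fin n → ℝ} (hx₀ : transPartAt x₀ F₀ = 0) {F : Module.End ℝ (Mink n)} (hF : F ∈ G)
    (hFboost : boostPart n F = 0) : transPartAt x₀ F ∈ translations G := by
  let K : Submodule ℝ (Module.End ℝ (Mink n)) := G.toSubmodule ⊓ LinearMap.ker (boostPart n)
  have K_rot : (K.map (rotPart n) : Set (Module.End ℝ (Fin n → ℝ))) ⊆ soE n := by
    rintro _ ⟨F, hF, rfl⟩
    exact rotPart_mem_soE (hG hF.1)
  obtain ⟨f, hf⟩ := exists_forall_mem_comp_eq (p := K) (f := rotPart n)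
    (g := projOC (translations G) ∘ₗ transPartAt x₀) fun F hF hrot => by
      refine projOC_eq_zero_iff.2 ?_
      simpa [transPartAt_apply, LinearMap.mem_ker.1 hF.2, hrot] using
        transPart_mem_translations hG hF.1 hF.2 hrot
  have lie_mem_K {F : Module.End ℝ (Mink n)} (hF : F ∈ K) : ⁅F₀, F⁆ ∈ K :=
    ⟨G.lie_mem hF₀ hF.1, boostPart_lie (hG hF₀) (hG hF.1)⟩
  have f_rot_eq_zero : f (rotPart n F) = 0 := by
    refine map_eq_zero_of_map_lie_eq_smul_add (isInnerProduct_dotE n) K_rot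
      (rotPart_mem_soE (hG hF₀)) ?_ hboost ?_ ⟨F, ⟨hF, hFboost⟩, rfl⟩
    · rintro _ ⟨F, hF, rfl⟩
      exact ⟨_, lie_mem_K hF, rotPart_lie (hG hF₀) (hG hF.1)⟩
    · rintro _ ⟨F, hF, rfl⟩
      rw [← rotPart_lie (hG hF₀) (hG hF.1), hf _ (lie_mem_K hF), hf _ hF]
      simp [transPartAt_lie x₀ (hG hF₀) (hG hF.1), hx₀, projOC_rotPart_apply hG hF₀]
  rw [hf F ⟨hF, hFboost⟩] at f_rot_eq_zero
  exact projOC_eq_zero_iff.1 f_rot_eq_zero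

lemma transPartAt_mem_translations (hG : (G : Set (Module.End ℝ (Mink n))) ⊆ soRp n)
    (hF₀ : F₀ ∈ G) (hboost : boostPart n F₀ ≠ 0) {x₀ : Fin n → ℝ} (hx₀ : transPartAt x₀ F₀ = 0)
    {F : Module.End ℝ (Mink n)} (hF : F ∈ G) : transPartAt x₀ F ∈ translations G := by
  have h := projOC_eq_zero_iff.2 <| transPartAt_mem_translations_of_boostPart_eq_zero hG hF₀ hboost
    hx₀ (G.lie_mem hF₀ hF) (boostPart_lie (hG hF₀) (hG hF))
  rw [transPartAt_lie x₀ (hG hF₀) (hG hF), hx₀, smul_zero, map_zero, add_zero, sub_zero, map_add,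
    map_smul, projOC_rotPart_apply hG hF₀] at h
  have injective :=
    (isInnerProduct_dotE n).injective_smul_add_of_skew (rotPart_mem_soE (hG hF₀)) hboost
  exact projOC_eq_zero_iff.1 (injective (by simpa using h))

lemma translations_eq_top (hG : (G : Set (Module.End ℝ (Mink n))) ⊆ soRp n)
    (hirr : WeaklyIrred (minkB n) (G : Set (Module.End ℝ (Mink n)))) (hF₀ : F₀ ∈ G)
    (hboost : boostPart n F₀ ≠ 0) : translations G = ⊤ := by
  obtain ⟨x₀, hx₀⟩ := exists_transPartAt_eq_zero (hG hF₀) hboost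
  refine eq_top_of_OC_eq_bot (eq_bot_of_rotPart_apply_mem hG hirr x₀ (fun F hF y hy => ?_)
    fun F hF y hy => ?_)
  · exact OC_apply_mem (rotPart_mem_soE (hG hF))
      (fun _ hX => rotPart_apply_mem_translations hG hF hX) hy
  · rw [(isInnerProduct_dotE n).apply_comm]
    exact hy _ (transPartAt_mem_translations hG hF₀ hboost hx₀ hF)

lemma coElem_mem_of_translations_eq_top (hG : (G : Set (Module.End ℝ (Mink n))) ⊆ soRp n)
    (htop : translations G = ⊤) {F : Module.End ℝ (Mink n)} (hF : F ∈ G) (X : Fin n → ℝ) :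
    coElem 0 (boostPart n F) (rotPart n F) X ∈ G :=
  (coElem_mem_iff hG hF).2 (htop ▸ Submodule.mem_top)

lemma isTypeOne_rotations (hG : (G : Set (Module.End ℝ (Mink n))) ⊆ soRp n)
    (htop : translations G = ⊤) (hF₀ : F₀ ∈ G) (hboost : boostPart n F₀ ≠ 0)
    (hrot : rotPart n F₀ = 0) : IsTypeOne (n := n) (rotations G hG) G := by
  refine Set.Subset.antisymm (fun F hF => ?_) ?_
  · exact ⟨_, _, ⟨F, hF, rfl⟩, _, eq_coElem_of_mem_soRp (hG hF)⟩
  · rintro _ ⟨a, _, ⟨F, hF, rfl⟩, X, rfl⟩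
    have hmem := G.add_mem hF (G.smul_mem ((a - boostPart n F) / boostPart n F₀) hF₀)
    simpa [hrot, hboost] using coElem_mem_of_translations_eq_top hG htop hmem X

lemma isTypeThree_rotations (hG : (G : Set (Module.End ℝ (Mink n))) ⊆ soRp n)
    (htop : translations G = ⊤) (hF₀ : F₀ ∈ G) (hboost : boostPart n F₀ ≠ 0)
    (hrot : ∀ F ∈ G, rotPart n F = 0 → boostPart n F = 0) :
    IsTypeThree (n := n) (rotations G hG) G := by
  obtain ⟨φ, hφ⟩ := exists_forall_mem_comp_eq (p := G.toSubmodule) hrot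
  have φ_lie : ∀ A ∈ rotations G hG, ∀ B ∈ rotations G hG, φ ⁅A, B⁆ = 0 := by
    rintro _ ⟨F, hF, rfl⟩ _ ⟨F', hF', rfl⟩
    rw [← rotPart_lie (hG hF) (hG hF'), hφ _ (G.lie_mem hF hF'), boostPart_lie (hG hF) (hG hF')]
  have φ_ne_zero : φ (rotPart n F₀) ≠ 0 := (hφ F₀ hF₀).symm ▸ hboost
  refine ⟨φ, ?_, φ_lie, ⟨_, ⟨F₀, hF₀, rfl⟩, φ_ne_zero⟩, Set.Subset.antisymm (fun F hF => ?_) ?_⟩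
  · obtain ⟨z, hz, hφz⟩ := exists_mem_centerSubmodule_map_eq (isInnerProduct_dotE n)
      (rotations_subset_soE hG) φ_lie ⟨F₀, hF₀, rfl⟩
    refine ⟨z, (mem_centerSubmodule.1 hz).1, ?_, (mem_centerSubmodule.1 hz).2⟩
    rintro rfl
    exact φ_ne_zero (by rw [← hφz, map_zero])
  · exact ⟨_, ⟨F, hF, rfl⟩, _, (hφ F hF).symm ▸ eq_coElem_of_mem_soRp (hG hF)⟩
  · rintro _ ⟨_, ⟨F, hF, rfl⟩, X, rfl⟩
    exact (hφ F hF).symm ▸ coElem_mem_of_translations_eq_top hG htop hF X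

end WithBoost

section WithoutBoost

variable {n : ℕ} {G : LieSubalgebra ℝ (Module.End ℝ (Mink n))}

/-- All elements of `G` have the form `(0, A, X)`, and the component of `X` orthogonal to
`translations G` is `ψ A`, as in the algebras of types 2 and 4. -/
structure IsTransverseMap (G : LieSubalgebra ℝ (Module.End ℝ (Mink n)))
    (ψ : Module.End ℝ (Fin n → ℝ) →ₗ[ℝ] (Fin n → ℝ)) : Prop where
  boostPart_eq_zero : ∀ F ∈ G, boostPart n F = 0
  map_rotPart : ∀ F ∈ G, ψ (rotPart n F) = projOC (translations G) (transPart n F)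

lemma exists_isTransverseMap (hG : (G : Set (Module.End ℝ (Mink n))) ⊆ soRp n)
    (hboost : ∀ F ∈ G, boostPart n F = 0) : ∃ ψ, IsTransverseMap G ψ := by
  obtain ⟨ψ, hψ⟩ := exists_forall_mem_comp_eq (p := G.toSubmodule) (f := rotPart n)
    (g := projOC (translations G) ∘ₗ transPart n) fun F hF hrot =>
      projOC_eq_zero_iff.2 (transPart_mem_translations hG hF (hboost F hF) hrot)
  exact ⟨ψ, hboost, hψ⟩

namespace IsTransverseMap

variable {ψ : Module.End ℝ (Fin n → ℝ) →ₗ[ℝ] (Fin n → ℝ)}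
  {hG : (G : Set (Module.End ℝ (Mink n))) ⊆ soRp n}

lemma map_mem_OC (hψ : IsTransverseMap G ψ) {A : Module.End ℝ (Fin n → ℝ)}
    (hA : A ∈ rotations G hG) : ψ A ∈ OC n (translations G) := by
  obtain ⟨F, hF, rfl⟩ := hA
  rw [hψ.map_rotPart F hF]
  exact projOC_mem _ _

lemma transPart_sub_mem (hψ : IsTransverseMap G ψ) {F : Module.End ℝ (Mink n)} (hF : F ∈ G) :
    transPart n F - ψ (rotPart n F) ∈ translations G := by
  rw [hψ.map_rotPart F hF]
  exact sub_projOC_mem _ _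

lemma map_lie (hψ : IsTransverseMap G ψ) {A A' : Module.End ℝ (Fin n → ℝ)}
    (hA : A ∈ rotations G hG) (hA' : A' ∈ rotations G hG) : ψ ⁅A, A'⁆ = A (ψ A') - A' (ψ A) := by
  obtain ⟨F, hF, rfl⟩ := hA
  obtain ⟨F', hF', rfl⟩ := hA'
  have trans_lie := transPartAt_lie 0 (hG hF) (hG hF')
  simp only [transPartAt_apply, hψ.boostPart_eq_zero _ hF, hψ.boostPart_eq_zero _ hF',
    map_zero, smul_zero, zero_smul, sub_zero, zero_add] at trans_lie
  rw [← rotPart_lie (hG hF) (hG hF'), hψ.map_rotPart _ (G.lie_mem hF hF'), hψ.map_rotPart _ hF,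
    hψ.map_rotPart _ hF', trans_lie, map_sub, projOC_rotPart_apply hG hF,
    projOC_rotPart_apply hG hF']

lemma exists_apply_map_sub_apply_eq_zero (hψ : IsTransverseMap G ψ) :
    ∃ x₀, ∀ A ∈ rotations G hG, ∀ A' ∈ rotations G hG, A' (ψ A - A x₀) = 0 := by
  let D : LieDerivation ℝ (rotations G hG) (Fin n → ℝ) :=
    { toLinearMap := ψ ∘ₗ (rotations G hG).toSubmodule.subtype
      leibniz' := fun A A' => hψ.map_lie A.2 A'.2 }
  have hB := isInnerProduct_dotE n
  have hso := rotations_subset_soE hG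
  obtain ⟨x₀, hx₀⟩ := exists_lie_derivation_sub_lie_eq_zero (isInnerProduct_neg_traceForm hB hso)
    (neg_traceForm_lieInvariant _) hB
    (fun A x y => eq_neg_of_add_eq_zero_left (hso A.2 x y)) D
  exact ⟨x₀, fun A hA A' hA' => hx₀ ⟨A, hA⟩ ⟨A', hA'⟩⟩

lemma eq_bot_of_apply_mem (hψ : IsTransverseMap G ψ)
    (hirr : WeaklyIrred (minkB n) (G : Set (Module.End ℝ (Mink n)))) (x₀ : Fin n → ℝ)
    {U : Submodule ℝ (Fin n → ℝ)} (hU : U ≤ OC n (translations G))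
    (hrot : ∀ A ∈ rotations G hG, ∀ y ∈ U, A y ∈ U)
    (horth : ∀ A ∈ rotations G hG, ∀ y ∈ U, dotE n (ψ A - A x₀) y = 0) : U = ⊥ := by
  refine eq_bot_of_rotPart_apply_mem hG hirr x₀ (fun F hF => hrot _ ⟨F, hF, rfl⟩)
    fun F hF y hy => ?_
  have split : transPartAt x₀ F =
      (transPart n F - ψ (rotPart n F)) + (ψ (rotPart n F) - rotPart n F x₀) := by
    rw [transPartAt_apply, hψ.boostPart_eq_zero F hF]
    module
  rw [split, map_add, LinearMap.add_apply, horth _ ⟨F, hF, rfl⟩ y hy, add_zero,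
    (isInnerProduct_dotE n).apply_comm]
  exact hU hy _ (hψ.transPart_sub_mem hF)

lemma apply_eq_zero (hψ : IsTransverseMap G ψ)
    (hirr : WeaklyIrred (minkB n) (G : Set (Module.End ℝ (Mink n))))
    {A : Module.End ℝ (Fin n → ℝ)} (hA : A ∈ rotations G hG) {y : Fin n → ℝ}
    (hy : y ∈ OC n (translations G)) : A y = 0 := by
  obtain ⟨x₀, hx₀⟩ := hψ.exists_apply_map_sub_apply_eq_zero (hG := hG)
  let I : Submodule ℝ (Fin n → ℝ) :=
    (LieModule.maxTrivSubmodule ℝ (rotations G hG) (Fin n → ℝ)).toSubmodule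
  have apply_mem_OC_I {A} (hA : A ∈ rotations G hG) (x : Fin n → ℝ) : A x ∈ OC n I :=
    fun i hi => by
      rw [eq_neg_of_add_eq_zero_left (rotations_subset_soE hG hA x i),
        show A i = 0 from hi ⟨A, hA⟩, map_zero, neg_zero]
  have apply_mem {A} (hA : A ∈ rotations G hG) {y} (hy : y ∈ OC n (translations G)) :
      A y ∈ OC n (translations G) := by
    obtain ⟨F, hF, rfl⟩ := hA
    exact OC_apply_mem (rotPart_mem_soE (hG hF))
      (fun _ hX => rotPart_apply_mem_translations hG hF hX) hy
  have hbot : OC n (translations G) ⊓ OC n I = ⊥ := by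
    refine hψ.eq_bot_of_apply_mem (hG := hG) hirr x₀ inf_le_left
      (fun A hA y hy => ⟨apply_mem hA hy.1, apply_mem_OC_I hA y⟩) fun A hA y hy => ?_
    rw [(isInnerProduct_dotE n).apply_comm]
    exact hy.2 _ fun A' => hx₀ A hA A' A'.2
  exact (Submodule.mem_bot ℝ).1 (hbot ▸ ⟨apply_mem hA hy, apply_mem_OC_I hA y⟩)

lemma map_lie_eq_zero (hψ : IsTransverseMap G ψ)
    (hirr : WeaklyIrred (minkB n) (G : Set (Module.End ℝ (Mink n))))
    {A A' : Module.End ℝ (Fin n → ℝ)} (hA : A ∈ rotations G hG) (hA' : A' ∈ rotations G hG) :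
    ψ ⁅A, A'⁆ = 0 := by
  rw [hψ.map_lie hA hA', hψ.apply_eq_zero hirr hA (hψ.map_mem_OC hA'),
    hψ.apply_eq_zero hirr hA' (hψ.map_mem_OC hA), sub_zero]

lemma OC_translations_eq_map (hψ : IsTransverseMap G ψ)
    (hirr : WeaklyIrred (minkB n) (G : Set (Module.End ℝ (Mink n)))) :
    OC n (translations G) = (rotations G hG).toSubmodule.map ψ := by
  let P := (rotations G hG).toSubmodule.map ψ
  have P_le : P ≤ OC n (translations G) := by
    rintro _ ⟨A, hA, rfl⟩
    exact hψ.map_mem_OC hA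
  have hbot : OC n (translations G) ⊓ OC n P = ⊥ := by
    refine hψ.eq_bot_of_apply_mem (hG := hG) hirr 0 inf_le_left (fun A hA y hy => ?_)
      fun A hA y hy => ?_
    · rw [hψ.apply_eq_zero hirr hA hy.1]
      exact zero_mem _
    · rw [map_zero, sub_zero, (isInnerProduct_dotE n).apply_comm]
      exact hy.2 _ ⟨A, hA, rfl⟩
  refine (eq_of_le_of_inf_le_of_sup_le (z := OC n P) P_le ?_ ?_).symm
  · rw [hbot]
    exact bot_le
  · rw [(isCompl_OC P).sup_eq_top]
    exact le_top

lemma finrank_OC_le (hψ : IsTransverseMap G ψ)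
    (hirr : WeaklyIrred (minkB n) (G : Set (Module.End ℝ (Mink n)))) :
    finrank ℝ (OC n (translations G)) ≤ finrank ℝ (centerSubmodule (rotations G hG)) := by
  have hle : OC n (translations G) ≤ (centerSubmodule (rotations G hG)).map ψ := by
    rw [hψ.OC_translations_eq_map (hG := hG) hirr]
    rintro _ ⟨A, hA, rfl⟩
    exact exists_mem_centerSubmodule_map_eq (isInnerProduct_dotE n) (rotations_subset_soE hG)
      (fun _ hA _ hA' => hψ.map_lie_eq_zero hirr hA hA') hA
  exact (Submodule.finrank_mono hle).trans (Submodule.finrank_map_le _ _)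

lemma coe_eq (hψ : IsTransverseMap G ψ) : (G : Set (Module.End ℝ (Mink n))) =
    {F | ∃ A ∈ rotations G hG, ∃ X ∈ translations G, F = coElem 0 0 A (X + ψ A)} := by
  refine Set.Subset.antisymm (fun F hF => ?_) ?_
  · refine ⟨_, ⟨F, hF, rfl⟩, _, hψ.transPart_sub_mem hF, ?_⟩
    have h := eq_coElem_of_mem_soRp (hG hF)
    rwa [hψ.boostPart_eq_zero F hF, ← sub_add_cancel (transPart n F) (ψ (rotPart n F))] at h
  · rintro _ ⟨_, ⟨F, hF, rfl⟩, X, hX, rfl⟩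
    have h := (coElem_mem_iff hG hF (X := X + ψ (rotPart n F))).2
    rw [hψ.boostPart_eq_zero F hF] at h
    refine h ?_
    have := sub_mem hX (hψ.transPart_sub_mem hF)
    rwa [sub_sub_eq_add_sub] at this

lemma isTypeFour_rotations (hψ : IsTransverseMap G ψ)
    (hirr : WeaklyIrred (minkB n) (G : Set (Module.End ℝ (Mink n)))) :
    IsTypeFour (n := n) (rotations G hG) G := by
  refine ⟨translations G, ψ, ?_, fun A hA y hy => hψ.apply_eq_zero hirr hA hy,
    ⟨centerSubmodule (rotations G hG), Set.ext fun _ => mem_centerSubmodule, hψ.finrank_OC_le hirr⟩,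
    fun A hA => hψ.map_mem_OC hA, fun y hy => ?_,
    fun A hA B hB => hψ.map_lie_eq_zero hirr hA hB, hψ.coe_eq⟩
  · rintro _ ⟨F, hF, rfl⟩ x hx
    exact rotPart_apply_mem_translations hG hF hx
  · rwa [hψ.OC_translations_eq_map (hG := hG) hirr] at hy

end IsTransverseMap

end WithoutBoost

section Converse

variable {n : ℕ} {E : Submodule ℝ (Fin n → ℝ)} {g : Set (Module.End ℝ (Mink n))}
  {W : Submodule ℝ (Mink n)}

/-- `g` contains an element with translation part `X` for every `X` in `E` and in `OC n E`; the
rotation part is zero in the first case, and maps into `E` and kills `X` in the second. All four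
types have this property, and it implies weak irreducibility. -/
structure HasTranslations (E : Submodule ℝ (Fin n → ℝ)) (g : Set (Module.End ℝ (Mink n))) :
    Prop where
  coElem_mem : ∀ X ∈ E, coElem 0 0 0 X ∈ g
  exists_coElem_mem : ∀ Y ∈ OC n E, ∃ A : Module.End ℝ (Fin n → ℝ),
    (∀ x, A x ∈ E) ∧ A Y = 0 ∧ coElem 0 0 A Y ∈ g

namespace HasTranslations

lemma exists_ne_zero_coElem_mem [NeZero n] (hg : HasTranslations E g) :
    ∃ X ≠ 0, coElem 0 0 0 X ∈ g := by
  rcases eq_or_ne E ⊥ with rfl | hE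
  · obtain ⟨Y, hY⟩ := exists_ne (0 : Fin n → ℝ)
    obtain ⟨A, hA, -, hmem⟩ := hg.exists_coElem_mem Y fun X hX => by
      rw [(Submodule.mem_bot ℝ).1 hX, map_zero]
    have A_eq_zero : A = 0 := LinearMap.ext fun x => (Submodule.mem_bot ℝ).1 (hA x)
    exact ⟨Y, hY, A_eq_zero ▸ hmem⟩
  · obtain ⟨X, hX, hX₀⟩ := E.ne_bot_iff.1 hE
    exact ⟨X, hX₀, hg.coElem_mem X hX⟩

lemma pvec_mem [NeZero n] (hg : HasTranslations E g) (hW : Invariant g W) {w : Mink n}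
    (hw : w ∈ W) (hu : w.2.2 ≠ 0) : pvec n ∈ W := by
  obtain ⟨X, hX₀, hX⟩ := hg.exists_ne_zero_coElem_mem
  have XX_ne_zero : dotE n X X ≠ 0 := mt (isInnerProduct_dotE n).apply_self_eq_zero.1 hX₀
  have h : coElem 0 0 0 X (coElem 0 0 0 X w) = (-(w.2.2 * dotE n X X)) • pvec n := by
    simp [coElem_zero_apply, pvec]
  refine (W.smul_mem_iff (neg_ne_zero.2 (mul_ne_zero hu XX_ne_zero))).1 ?_
  exact h ▸ hW _ hX _ (hW _ hX _ hw)

lemma emb_mem [NeZero n] (hg : HasTranslations E g) (hW : Invariant g W) {w : Mink n}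
    (hw : w ∈ W) (hu : w.2.2 ≠ 0) (x : Fin n → ℝ) : emb x ∈ W := by
  have emb_mem_of_coElem_mem {A : Module.End ℝ (Fin n → ℝ)} {X : Fin n → ℝ}
      (hmem : coElem 0 0 A X ∈ g) (hA : emb (A w.2.1) ∈ W) : emb X ∈ W := by
    have h : emb X = w.2.2⁻¹ •
        (emb (A w.2.1) + dotE n X w.2.1 • pvec n - coElem 0 0 A X w) := by
      simp [coElem_zero_apply, emb, pvec, hu]
    rw [h]
    exact W.smul_mem _ (W.sub_mem
      (W.add_mem hA (W.smul_mem _ (hg.pvec_mem hW hw hu))) (hW _ hmem _ hw))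
  have emb_mem_of_mem (X : Fin n → ℝ) (hX : X ∈ E) : emb X ∈ W :=
    emb_mem_of_coElem_mem (hg.coElem_mem X hX) W.zero_mem
  obtain ⟨A, hA, -, hmem⟩ := hg.exists_coElem_mem _ (projOC_mem E x)
  have h : emb x = (emb (x - projOC E x) + emb (projOC E x) : Mink n) := by simp [emb]
  rw [h]
  exact W.add_mem (emb_mem_of_mem _ (sub_projOC_mem E x))
    (emb_mem_of_coElem_mem hmem (emb_mem_of_mem _ (hA _)))

lemma eq_top_of_mem [NeZero n] (hg : HasTranslations E g) (hW : Invariant g W) {w : Mink n}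
    (hw : w ∈ W) (hu : w.2.2 ≠ 0) : W = ⊤ := by
  refine eq_top_iff.2 fun z _ => ?_
  have h : z = (z.2.2 / w.2.2) • w + (z.1 - z.2.2 / w.2.2 * w.1) • pvec n +
      emb (z.2.1 - (z.2.2 / w.2.2) • w.2.1) := by
    refine Prod.ext ?_ (Prod.ext ?_ ?_) <;> simp [pvec, emb, hu]
  rw [h]
  exact W.add_mem (W.add_mem (W.smul_mem _ hw) (W.smul_mem _ (hg.pvec_mem hW hw hu)))
    (hg.emb_mem hW hw hu _)

lemma eq_bot_of_forall_eq_zero (hg : HasTranslations E g) (hW : Invariant g W)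
    (hnd : IsNondegOn (minkB n) W) (hu : ∀ w ∈ W, w.2.2 = 0) : W = ⊥ := by
  have eq_zero_of_mem {c : ℝ} (hc : ((c, 0, 0) : Mink n) ∈ W) : c = 0 :=
    congrArg Prod.fst (hnd _ hc fun w hw => by simp [minkB, hu w hw])
  refine (Submodule.eq_bot_iff W).2 fun w hw => ?_
  have mem_OC : w.2.1 ∈ OC n E := fun X hX => by
    rw [(isInnerProduct_dotE n).apply_comm]
    apply eq_zero_of_mem
    simpa [coElem_zero_apply, hu w hw] using hW _ (hg.coElem_mem X hX) w hw
  obtain ⟨A, -, hA, hmem⟩ := hg.exists_coElem_mem _ mem_OC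
  have eq_zero : w.2.1 = 0 := by
    refine (isInnerProduct_dotE n).apply_self_eq_zero.1 (eq_zero_of_mem ?_)
    simpa [coElem_zero_apply, hu w hw, hA] using hW _ hmem w hw
  have hw' : w = (w.1, 0, 0) := Prod.ext rfl (Prod.ext eq_zero (hu w hw))
  rw [hw', eq_zero_of_mem (c := w.1) (hw' ▸ hw)]
  rfl

lemma weaklyIrred [NeZero n] (hg : HasTranslations E g) : WeaklyIrred (minkB n) g := by
  intro W hW hnd
  by_cases hu : ∀ w ∈ W, w.2.2 = 0
  · exact Or.inl (hg.eq_bot_of_forall_eq_zero hW hnd hu)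
  · push Not at hu
    obtain ⟨w, hw, hu⟩ := hu
    exact Or.inr (hg.eq_top_of_mem hW hw hu)

end HasTranslations

lemma hasTranslations_top (hg : ∀ X, coElem 0 0 0 X ∈ g) : HasTranslations ⊤ g where
  coElem_mem X _ := hg X
  exists_coElem_mem Y _ := ⟨0, fun _ => Submodule.mem_top, rfl, hg Y⟩

variable {h : Set (Module.End ℝ (Fin n → ℝ))}

lemma IsTypeOne.hasTranslations (hg : IsTypeOne h g) (h₀ : 0 ∈ h) : HasTranslations ⊤ g :=
  hasTranslations_top fun X => hg ▸ ⟨0, 0, h₀, X, rfl⟩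

lemma IsTypeTwo.hasTranslations (hg : IsTypeTwo h g) (h₀ : 0 ∈ h) : HasTranslations ⊤ g :=
  hasTranslations_top fun X => hg ▸ ⟨0, h₀, X, rfl⟩

lemma IsTypeThree.hasTranslations (hg : IsTypeThree h g) (h₀ : 0 ∈ h) : HasTranslations ⊤ g := by
  obtain ⟨φ, -, -, -, rfl⟩ := hg
  exact hasTranslations_top fun X => ⟨0, h₀, X, by rw [map_zero]⟩

lemma IsTypeFour.exists_hasTranslations (hg : IsTypeFour h g) (h₀ : 0 ∈ h) :
    ∃ E, HasTranslations E g := by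
  obtain ⟨E, ψ, hE, hOC, -, -, hψ, -, rfl⟩ := hg
  refine ⟨E, fun X hX => ⟨0, h₀, X, hX, by simp⟩, fun Y hY => ?_⟩
  obtain ⟨A, hA, rfl⟩ := hψ Y hY
  refine ⟨A, fun x => ?_, hOC A hA _ hY, A, hA, 0, zero_mem E, by simp⟩
  have h := hE A hA _ (sub_projOC_mem E x)
  rwa [map_sub, hOC A hA _ (projOC_mem E x), sub_zero] at h

end Converse

/-- The Bérard-Bergery–Ikemakhen classification: a subalgebra
`𝔤 ⊆ so(1,n+1)_{ℝp}` is weakly irreducible if and only if it is of one of the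
four types `𝔤^{1,𝔥}`, `𝔤^{2,𝔥}`, `𝔤^{3,𝔥,φ}`, `𝔤^{4,𝔥,m,ψ}`. -/
theorem berard_bergery_ikemakhen (n : ℕ) (hn : 1 ≤ n)
    (g : Set (Module.End ℝ (Mink n)))
    (hsub : IsLieSub g) (hg : g ⊆ soRp n) :
    WeaklyIrred (minkB n) g ↔
      ∃ h : Set (Module.End ℝ (Fin n → ℝ)), IsLieSub h ∧ h ⊆ soE n ∧
        (g = {F | ∃ a : ℝ, ∃ A ∈ h, ∃ X : Fin n → ℝ, F = coElem 0 a A X} ∨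
         g = {F | ∃ A ∈ h, ∃ X : Fin n → ℝ, F = coElem 0 0 A X} ∨
         (∃ φ : Module.End ℝ (Fin n → ℝ) →ₗ[ℝ] ℝ,
            (∃ A ∈ h, A ≠ 0 ∧ ∀ B ∈ h, A * B = B * A) ∧
            (∀ A ∈ h, ∀ B ∈ h, φ (A * B - B * A) = 0) ∧ (∃ A ∈ h, φ A ≠ 0) ∧
            g = {F | ∃ A ∈ h, ∃ X : Fin n → ℝ, F = coElem 0 (φ A) A X}) ∨
         (∃ E : Submodule ℝ (Fin n → ℝ),
          ∃ ψ : Module.End ℝ (Fin n → ℝ) →ₗ[ℝ] (Fin n → ℝ),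
            (∀ A ∈ h, ∀ x ∈ E, A x ∈ E) ∧ (∀ A ∈ h, ∀ y ∈ OC n E, A y = 0) ∧
            (∃ Zc : Submodule ℝ (Module.End ℝ (Fin n → ℝ)),
              (Zc : Set (Module.End ℝ (Fin n → ℝ)))
                  = {A | A ∈ h ∧ ∀ B ∈ h, A * B = B * A} ∧
              Module.finrank ℝ (OC n E) ≤ Module.finrank ℝ Zc) ∧
            (∀ A ∈ h, ψ A ∈ OC n E) ∧ (∀ y ∈ OC n E, ∃ A ∈ h, ψ A = y) ∧
            (∀ A ∈ h, ∀ B ∈ h, ψ (A * B - B * A) = 0) ∧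
            g = {F | ∃ A ∈ h, ∃ X ∈ E, F = coElem 0 0 A (X + ψ A)})) := by
  constructor
  · intro hirr
    obtain ⟨G, rfl⟩ := hsub.exists_lieSubalgebra
    refine ⟨rotations G hg, isLieSub_coe _, rotations_subset_soE hg, ?_⟩
    by_cases hboost : ∀ F ∈ G, boostPart n F = 0
    · obtain ⟨ψ, hψ⟩ := exists_isTransverseMap hg hboost
      exact Or.inr (Or.inr (Or.inr (hψ.isTypeFour_rotations hirr)))
    push Not at hboost
    obtain ⟨F₀, hF₀, hboost⟩ := hboost
    have htop := translations_eq_top hg hirr hF₀ hboost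
    by_cases hrot : ∀ F ∈ G, rotPart n F = 0 → boostPart n F = 0
    · exact Or.inr (Or.inr (Or.inl (isTypeThree_rotations hg htop hF₀ hboost hrot)))
    · push Not at hrot
      obtain ⟨F, hF, hrot, hboost⟩ := hrot
      exact Or.inl (isTypeOne_rotations hg htop hF hboost hrot)
  · have : NeZero n := ⟨Nat.one_le_iff_ne_zero.1 hn⟩
    rintro ⟨h, hh, -, hone | htwo | hthree | hfour⟩
    · exact (IsTypeOne.hasTranslations hone hh.1).weaklyIrred
    · exact (IsTypeTwo.hasTranslations htwo hh.1).weaklyIrred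
    · exact (IsTypeThree.hasTranslations hthree hh.1).weaklyIrred
    · obtain ⟨E, hE⟩ := IsTypeFour.exists_hasTranslations hfour hh.1
      exact hE.weaklyIrred

end Weyl
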